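/- If f, g : D → ℂ are holomorphic on a simply connected domain D, then the three 1-forms ω₁ = i/2((f²+g²)dz − (conj f² + conj g²)dz̄), ω₂ = 1/2((g²−f²)dz + (conj g² − conj f²)dz̄), ω₃ = fg dz + (conj f)(conj g) dz̄ are real-valued and closed, hence exact; the resulting map x = (∫ω₁, ∫ω₂, ∫ω₃) : D → ℝ³ is well-defined (path-independent). -/

import Mathlib

open Complex

/-- The Weierstrass–Enneper 1-forms: `ω k z` is the ℝ-linear-in-`w` integrand,
evaluated on a tangent vector `w ∈ ℂ ≅ ℝ²` (so `dz(w) = w`, `dz̄(w) = conj w`). -/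
noncomputable def weierstrassForm (f g : ℂ → ℂ) : Fin 3 → ℂ → ℂ → ℂ
  | 0 => fun z w => I / 2 * ((f z ^ 2 + g z ^ 2) * w -
      ((starRingEnd ℂ (f z)) ^ 2 + (starRingEnd ℂ (g z)) ^ 2) * starRingEnd ℂ w)
  | 1 => fun z w => 1 / 2 * ((g z ^ 2 - f z ^ 2) * w +
      ((starRingEnd ℂ (g z)) ^ 2 - (starRingEnd ℂ (f z)) ^ 2) * starRingEnd ℂ w)
  | 2 => fun z w => f z * g z * w + starRingEnd ℂ (f z) * starRingEnd ℂ (g z) * starRingEnd ℂ w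

/-- The complex numbers with the discrete topology. -/
structure DiscreteComplex where
  /-- the underlying complex number -/
  val : ℂ

instance : TopologicalSpace DiscreteComplex := ⊥

instance : DiscreteTopology DiscreteComplex := ⟨rfl⟩

/-- The bundle (with discrete fibre) of germs of primitives, built from local primitives. -/
noncomputable def primitiveCore (D : Set ℂ) (r : D → ℝ) (F : D → ℂ → ℂ) (hr : ∀ i, 0 < r i)
    (hF : ∀ i j : D, ∃ c : ℂ, ∀ x ∈ Metric.ball (i : ℂ) (r i) ∩ Metric.ball (j : ℂ) (r j),
      F i x - F j x = c) : FiberBundleCore D D DiscreteComplex where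
  baseSet i := {x | (x : ℂ) ∈ Metric.ball (i : ℂ) (r i)}
  isOpen_baseSet i := Metric.isOpen_ball.preimage continuous_subtype_val
  indexAt x := x
  mem_baseSet_at x := Metric.mem_ball_self (hr x)
  coordChange i j x v := ⟨v.val + (F i x - F j x)⟩
  coordChange_self i x hx v := by simp
  continuousOn_coordChange i j := by
    obtain ⟨c, hc⟩ := hF i j
    have h : Continuous (fun p : D × DiscreteComplex => (⟨p.2.val + c⟩ : DiscreteComplex)) :=
      (continuous_of_discreteTopology (f := fun v : DiscreteComplex =>
        (⟨v.val + c⟩ : DiscreteComplex))).comp continuous_snd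
    refine h.continuousOn.congr ?_
    rintro ⟨x, v⟩ ⟨hx, -⟩
    simp only [hc x hx]
  coordChange_comp i j k x hx v := by
    congr 1
    ring

/-- A holomorphic function on a simply connected open set has a primitive. -/
theorem exists_primitive_of_simplyConnected (D : Set ℂ) (hD : IsOpen D)
    (hsc : SimplyConnectedSpace D) (h : ℂ → ℂ) (hh : DifferentiableOn ℂ h D) :
    ∃ H : ℂ → ℂ, ∀ z ∈ D, HasDerivAt H (h z) z := by
  classical
  have h1 : ∀ i : D, ∃ r > 0, Metric.ball (i : ℂ) r ⊆ D := fun i => Metric.isOpen_iff.1 hD i i.2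
  choose r hr hrD using h1
  have h2 : ∀ i : D, ∃ F : ℂ → ℂ, ∀ z ∈ Metric.ball (i : ℂ) (r i), HasDerivAt F (h z) z :=
    fun i => (hh.mono (hrD i)).isExactOn_ball
  choose F hF using h2
  have h3 : ∀ i j : D, ∃ c : ℂ, ∀ x ∈ Metric.ball (i : ℂ) (r i) ∩ Metric.ball (j : ℂ) (r j),
      F i x - F j x = c := by
    intro i j
    have hd : ∀ x ∈ Metric.ball (i : ℂ) (r i) ∩ Metric.ball (j : ℂ) (r j),
        HasDerivAt (fun x => F i x - F j x) 0 x := by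
      intro x hx
      simpa using (hF i x hx.1).fun_sub (hF j x hx.2)
    exact (Metric.isOpen_ball.inter Metric.isOpen_ball).exists_is_const_of_deriv_eq_zero
      ((convex_ball _ _).inter (convex_ball _ _)).isPreconnected
      (fun x hx => (hd x hx).differentiableAt.differentiableWithinAt)
      (fun x hx => (hd x hx).deriv)
  let Z := primitiveCore D r F hr h3
  have hcov : IsCoveringMap Z.proj :=
    IsCoveringMap.mk Z.proj (fun _ => DiscreteComplex) (fun x => Z.localTriv x)
      (fun x => Z.mem_baseSet_at x)
  have := hD.locallyPathConnectedSpace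
  obtain ⟨a₀⟩ : Nonempty D := inferInstance
  let e₀ : Z.TotalSpace := ⟨a₀, (⟨0⟩ : DiscreteComplex)⟩
  obtain ⟨s, ⟨-, hs⟩, -⟩ := hcov.existsUnique_continuousMap_lifts (ContinuousMap.id D) a₀ e₀ rfl
  have hs1 : ∀ x, (s x).1 = x := fun x => congr_fun hs x
  let G : D → ℂ := fun x => F (s x).1 x + DiscreteComplex.val (s x).2
  refine ⟨fun z => if hz : z ∈ D then G ⟨z, hz⟩ else 0, fun z hz => ?_⟩
  let z₀ : D := ⟨z, hz⟩
  let T : D → DiscreteComplex := fun x => (Z.localTriv z₀ (s x)).2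
  have hT : ∀ x, (T x).val = DiscreteComplex.val (s x).2 + (F (s x).1 (s x).1 - F z₀ (s x).1) :=
    fun x => rfl
  have hTc : ContinuousAt T z₀ := by
    have hmem : s z₀ ∈ (Z.localTriv z₀).source := by
      change (s z₀).1 ∈ Z.baseSet z₀
      rw [hs1]
      exact Z.mem_baseSet_at z₀
    have h5 : ContinuousAt (fun e => Z.localTriv z₀ e) (s z₀) :=
      (Z.localTriv z₀).continuousAt hmem
    exact continuousAt_snd.comp (ContinuousAt.comp h5 s.continuous.continuousAt)
  have hev : ∀ᶠ x in nhds z₀, T x = T z₀ := by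
    have : {T z₀} ∈ nhds (T z₀) := by simp
    exact hTc this
  have hG : ∀ᶠ x in nhds z₀, G x = F z₀ x + (T z₀).val := by
    filter_upwards [hev] with x hx
    rw [← hx, hT x, hs1]
    change F (s x).1 x + _ = _
    rw [hs1]
    ring
  have hG' : ∀ᶠ x in nhds z, (if hz : x ∈ D then G ⟨x, hz⟩ else 0) = F z₀ x + (T z₀).val := by
    have h6 := (hD.isOpenEmbedding_subtypeVal.map_nhds_eq z₀)
    change ∀ᶠ x in nhds (z₀ : ℂ), _
    rw [← h6, Filter.eventually_map]
    filter_upwards [hG] with x hx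
    simpa using hx
  exact ((hF z₀ z (Metric.mem_ball_self (hr z₀))).add_const _).congr_of_eventuallyEq hG'

theorem weierstrass_forms_real_closed_exact (D : Set ℂ) (hD : IsOpen D)
    (hsc : SimplyConnectedSpace D) (f g : ℂ → ℂ)
    (hf : DifferentiableOn ℂ f D) (hg : DifferentiableOn ℂ g D) :
    (∀ k, ∀ z ∈ D, ∀ w : ℂ, (weierstrassForm f g k z w).im = 0) ∧
    ∃ x : Fin 3 → ℂ → ℝ, ∀ k, ∀ z ∈ D, ∃ L : ℂ →L[ℝ] ℝ,
      HasFDerivAt (x k) L z ∧ ∀ w : ℂ, (L w : ℝ) = (weierstrassForm f g k z w).re := by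
  let h : Fin 3 → ℂ → ℂ := ![fun z => I * (f z ^ 2 + g z ^ 2), fun z => g z ^ 2 - f z ^ 2,
    fun z => 2 * (f z * g z)]
  have key : ∀ k z w, weierstrassForm f g k z w = (((h k z * w).re : ℝ) : ℂ) := by
    intro k z w
    rw [Complex.re_eq_add_conj]
    have h2 : starRingEnd ℂ 2 = 2 := map_ofNat _ 2
    fin_cases k
    · simp [weierstrassForm, h, h2]; ring
    · simp [weierstrassForm, h, h2]; ring
    · simp [weierstrassForm, h, h2]; ring
  have hh : ∀ k, DifferentiableOn ℂ (h k) D := by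
    intro k
    fin_cases k
    · exact ((hf.pow 2).add (hg.pow 2)).const_mul I
    · exact (hg.pow 2).sub (hf.pow 2)
    · exact (hf.mul hg).const_mul 2
  refine ⟨fun k z _ w => by rw [key, Complex.ofReal_im], ?_⟩
  choose H hH using fun k => exists_primitive_of_simplyConnected D hD hsc (h k) (hh k)
  refine ⟨fun k z => (H k z).re, fun k z hz => ⟨_,
    reCLM.hasFDerivAt.comp z ((hH k z hz).hasFDerivAt.restrictScalars ℝ), fun w => ?_⟩⟩
  rw [key, Complex.ofReal_re]
  simp [mul_comm]
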